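/- arXiv:0708.4381 — 3 statements merged into one kernel-verified Lean document; each statement's English description precedes it below -/
import Mathlib

section
/- Let F be a finite field and suppose a subgroup H of the projective general linear group PGL(n, F) is isomorphic to the alternating group A_{4d₁} for some positive integer d₁. Then n ≥ d₁. -/
/-!
In a central extension the commutator of two elements depends only on their images, so an element
lifting a commutator `⁅x, y⁆` commutes with every element whose image commutes with both `x` and
`y`.

Split the `4 * d` letters into `d` blocks of four and put a copy `tᵢ` of a commutator `t = ⁅u, v⁆`,
with `v` even, into every block. If `u` is odd, `tᵢ` is still a commutator of even permutations,
`tᵢ = ⁅uᵢ * uₖ, vᵢ⁆`, where the factor `uₖ` in another block corrects the sign. For `d ≥ 3` the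
block `k` can be kept away from the one supporting `tⱼ`, so any lifts of `tᵢ` and `tⱼ` to `GL n`
commute, and hence the copy of `⟨t⟩ ^ d` in `PGL n` has a commutative preimage. Over an
algebraically closed field its elements can be lifted to matrices whose order divides the order `ℓ`
of `t`. If `ℓ` is nonzero in the field, these are simultaneously diagonalizable with `ℓ`-th roots of
unity as eigenvalues, which gives `ℓ ^ d ≤ ℓ ^ n`. A double transposition `t` serves away from
characteristic two, a three-cycle in characteristic two.
-/

open Module Matrix
open scoped MatrixGroups commutatorElement

section SimultaneousDiagonalization

variable {K V ι : Type*} [Field K] [IsAlgClosed K] [AddCommGroup V] [Module K V]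
  [FiniteDimensional K V] {f : ι → End K V}

theorem exists_basis_forall_hasEigenvector
    (hcomm : Pairwise fun i j ↦ Commute (f i) (f j)) (hss : ∀ i, (f i).IsSemisimple) :
    ∃ (b : Basis (Fin (finrank K V)) K V) (c : ι → Fin (finrank K V) → K),
      ∀ i j, (f i).HasEigenvector (c i j) (b j) := by
  let jointEigenvectors : Set V := {v | ∀ i, ∃ μ : K, f i v = μ • v}
  have hspan : ⊤ ≤ Submodule.span K jointEigenvectors := by
    rw [← End.iSup_iInf_maxGenEigenspace_eq_top_of_iSup_maxGenEigenspace_eq_top_of_commute f hcomm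
      fun i ↦ End.iSup_maxGenEigenspace_eq_top (f i)]
    refine iSup_le fun χ v hv ↦ Submodule.subset_span fun i ↦ ⟨χ i, ?_⟩
    rw [← End.mem_eigenspace_iff,
      ← (hss i).isFinitelySemisimple.maxGenEigenspace_eq_eigenspace]
    exact (Submodule.mem_iInf _).1 hv i
  let b₀ := Basis.ofSpan hspan
  have := Module.Finite.finite_basis b₀
  have := Fintype.ofFinite
    ((linearIndepOn_empty K id).extend (Set.empty_subset jointEigenvectors))
  let b := b₀.reindex (Fintype.equivFinOfCardEq (finrank_eq_card_basis b₀).symm)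
  have hb (i : ι) (j) : ∃ μ, f i (b j) = μ • b j :=
    Basis.ofSpan_subset hspan (by simp [b, b₀]) i
  choose c hc using hb
  exact ⟨b, c, fun i j ↦ ⟨End.mem_eigenspace_iff.2 (hc i j), b.ne_zero j⟩⟩

theorem enatCard_le_pow_finrank_of_pow_eq_one {ℓ : ℕ} (hℓ : (ℓ : K) ≠ 0)
    (hf : Function.Injective f) (hcomm : Pairwise fun i j ↦ Commute (f i) (f j))
    (hpow : ∀ i, f i ^ ℓ = 1) : ENat.card ι ≤ (ℓ ^ finrank K V : ℕ) := by
  have : NeZero ℓ := ⟨by rintro rfl; simp at hℓ⟩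
  have hss (i : ι) : (f i).IsSemisimple :=
    End.isSemisimple_of_squarefree_aeval_eq_zero
      (Polynomial.separable_X_pow_sub_C (1 : K) hℓ one_ne_zero).squarefree (by simp [hpow])
  obtain ⟨b, c, hbc⟩ := exists_basis_forall_hasEigenvector hcomm hss
  have hc (i : ι) (j) : c i j ^ ℓ = 1 := by
    refine smul_left_injective K (b.ne_zero j) ?_
    simpa [hpow] using ((hbc i j).pow_apply ℓ).symm
  let eigenvalues (i : ι) (j : Fin (finrank K V)) : rootsOfUnity ℓ K :=
    rootsOfUnity.mkOfPowEq (c i j) (hc i j)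
  have heigenvalues : Function.Injective eigenvalues := fun i i' h ↦ hf <| b.ext fun j ↦ by
    have hj : c i j = c i' j := congr_arg (fun χ ↦ ((χ j : Kˣ) : K)) h
    rw [(hbc i j).apply_eq_smul, (hbc i' j).apply_eq_smul, hj]
  calc ENat.card ι ≤ ENat.card (Fin (finrank K V) → rootsOfUnity ℓ K) :=
        ENat.card_le_card_of_injective heigenvalues
    _ = (Nat.card (rootsOfUnity ℓ K) ^ finrank K V : ℕ) := by
        rw [ENat.card_eq_coe_natCard, Nat.card_fun, Nat.card_fin]
    _ ≤ (ℓ ^ finrank K V : ℕ) := by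
        gcongr
        exact card_rootsOfUnity K ℓ

end SimultaneousDiagonalization

section CentralExtension

variable {E Q : Type*} [Group E] [Group Q] {π : E →* Q}

theorem commute_inv_mul_of_map_eq (hker : π.ker ≤ Subgroup.center E) {a b : E} (h : π a = π b)
    (g : E) : Commute (a⁻¹ * b) g :=
  (Subgroup.mem_center_iff.1 (hker (π.eq_iff.1 h.symm)) g).symm

theorem commutatorElement_eq_of_map_eq (hker : π.ker ≤ Subgroup.center E) {a a' b b' : E}
    (ha : π a = π a') (hb : π b = π b') : ⁅a, b⁆ = ⁅a', b'⁆ := by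
  have hleft : ⁅a⁻¹ * a', b'⁆ = 1 :=
    commutatorElement_eq_one_iff_commute.2 (commute_inv_mul_of_map_eq hker ha b')
  have hright : ⁅a, b⁻¹ * b'⁆ = 1 :=
    commutatorElement_eq_one_iff_commute.2 (commute_inv_mul_of_map_eq hker hb a).symm
  calc ⁅a, b⁆ = ⁅a, b * (b⁻¹ * b')⁆ := by
        rw [commutatorElement_mul_right_eq_mul_conj, hright, mul_one, mul_inv_cancel_right]
    _ = ⁅a, b'⁆ := by rw [mul_inv_cancel_left]
    _ = ⁅a * (a⁻¹ * a'), b'⁆ := by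
        rw [commutatorElement_mul_left_eq_conj_mul, hleft, mul_one, mul_inv_cancel, one_mul]
    _ = ⁅a', b'⁆ := by rw [mul_inv_cancel_left]

theorem commute_of_map_eq_commutatorElement (hker : π.ker ≤ Subgroup.center E)
    (hπ : Function.Surjective π) {x y : Q} {g h : E} (hg : π g = ⁅x, y⁆)
    (hx : Commute x (π h)) (hy : Commute y (π h)) : Commute g h := by
  obtain ⟨a, rfl⟩ := hπ x
  obtain ⟨b, rfl⟩ := hπ y
  have hconj {c : E} (hc : Commute (π c) (π h)) : π (h * c * h⁻¹) = π c := by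
    rw [map_mul, map_mul, map_inv, ← hc.eq, mul_inv_cancel_right]
  have hab : Commute ⁅a, b⁆ h := by
    have : h * ⁅a, b⁆ * h⁻¹ = ⁅a, b⁆ :=
      (conjugate_commutatorElement a b h).trans
        (commutatorElement_eq_of_map_eq hker (hconj hx) (hconj hy))
    exact (mul_inv_eq_iff_eq_mul.1 this).symm
  have hmap : π ⁅a, b⁆ = π g := (map_commutatorElement π a b).trans hg.symm
  simpa only [mul_inv_cancel_left] using hab.mul_left (commute_inv_mul_of_map_eq hker hmap h)

theorem exists_map_eq_and_pow_eq_one (hker : π.ker ≤ Subgroup.center E)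
    (hπ : Function.Surjective π) {ℓ : ℕ} (hroot : ∀ z ∈ π.ker, ∃ w ∈ π.ker, w ^ ℓ = z)
    {x : Q} (hx : x ^ ℓ = 1) : ∃ g, π g = x ∧ g ^ ℓ = 1 := by
  obtain ⟨g, rfl⟩ := hπ x
  obtain ⟨w, hw, hwg⟩ := hroot (g ^ ℓ) (by rw [MonoidHom.mem_ker, map_pow, hx])
  have hcomm : Commute g w⁻¹ := Subgroup.mem_center_iff.1 (hker (inv_mem hw)) g
  refine ⟨g * w⁻¹, ?_, ?_⟩
  · rw [map_mul, map_inv, MonoidHom.mem_ker.1 hw, inv_one, mul_one]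
  · rw [hcomm.mul_pow, inv_pow, hwg, mul_inv_cancel]

theorem isMulCommutative_comap_closure (hker : π.ker ≤ Subgroup.center E)
    (hπ : Function.Surjective π) {S : Set Q}
    (hS : ∀ g h, π g ∈ S → π h ∈ S → π g ≠ π h → Commute g h) :
    IsMulCommutative ((Subgroup.closure S).comap π) := by
  have hclosure : (Subgroup.closure S).comap π = Subgroup.closure (π ⁻¹' S ∪ π.ker) := by
    rw [Subgroup.closure_union, Subgroup.closure_eq, ← Subgroup.comap_map_eq,
      MonoidHom.map_closure, Set.image_preimage_eq S hπ]
  rw [hclosure]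
  refine Subgroup.isMulCommutative_closure ?_
  rintro g (hg | hg) h (hh | hh)
  · obtain hgh | hgh := eq_or_ne (π g) (π h)
    · have hcomm : Commute (g * (g⁻¹ * h)) g :=
        (Commute.refl g).mul_left (commute_inv_mul_of_map_eq hker hgh g)
      rw [mul_inv_cancel_left] at hcomm
      exact hcomm.symm
    · exact hS g h hg hh hgh
  · exact Subgroup.mem_center_iff.1 (hker hh) g
  all_goals exact (Subgroup.mem_center_iff.1 (hker hg) h).symm

end CentralExtension

section ProjectiveGeneralLinear

variable {m : Type*} [Fintype m] [DecidableEq m]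

theorem projGenLinGroup_map_injective {R S : Type*} [CommRing R] [CommRing S] {f : R →+* S}
    (hf : Function.Injective f) :
    Function.Injective (ProjGenLinGroup.map (n := m) f) := by
  have hGL : Function.Injective (GeneralLinearGroup.map (n := m) f) :=
    Units.map_injective (Matrix.map_injective hf)
  refine (injective_iff_map_eq_one _).2 fun x hx ↦ ?_
  obtain ⟨g, rfl⟩ := ProjGenLinGroup.mk_surjective x
  rw [ProjGenLinGroup.map_mk, ProjGenLinGroup.mk_eq_one, Subgroup.mem_center_iff] at hx
  rw [ProjGenLinGroup.mk_eq_one, Subgroup.mem_center_iff]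
  exact fun h ↦ hGL (by simpa only [map_mul] using hx (GeneralLinearGroup.map f h))

theorem subsingleton_projGenLinGroup [Subsingleton m] (R : Type*) [CommRing R] :
    Subsingleton PGL(m, R) := by
  refine subsingleton_of_forall_eq 1 fun x ↦ ?_
  obtain ⟨g, rfl⟩ := ProjGenLinGroup.mk_surjective x
  rw [ProjGenLinGroup.mk_eq_one, GeneralLinearGroup.mem_center_iff_val_mem_range_scalar]
  cases isEmpty_or_nonempty m with
  | inl _ => exact ⟨0, Subsingleton.elim _ _⟩
  | inr h =>
    obtain ⟨i⟩ := h
    refine ⟨g i i, ?_⟩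
    ext j k
    simp [Subsingleton.elim j i, Subsingleton.elim k i]

variable {K : Type*} [Field K] [IsAlgClosed K]

theorem exists_pow_eq_of_mem_center_generalLinearGroup {ℓ : ℕ} (hℓ : ℓ ≠ 0) {z : GL m K}
    (hz : z ∈ Subgroup.center (GL m K)) : ∃ w ∈ Subgroup.center (GL m K), w ^ ℓ = z := by
  rw [GeneralLinearGroup.center_eq_range_scalar] at hz ⊢
  obtain ⟨c, rfl⟩ := hz
  obtain ⟨r, hr⟩ := IsAlgClosed.exists_pow_nat_eq (c : K) (Nat.pos_of_ne_zero hℓ)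
  have hr0 : r ≠ 0 := by
    rintro rfl
    exact c.ne_zero (by rw [← hr, zero_pow hℓ])
  refine ⟨_, ⟨Units.mk0 r hr0, rfl⟩, ?_⟩
  have hrc : Units.mk0 r hr0 ^ ℓ = c := Units.ext (by simpa using hr)
  rw [← map_pow, hrc]

theorem enatCard_le_pow_card_of_injective_projGenLinGroup {B : Type*} [Group B] {ℓ : ℕ}
    (hℓ : (ℓ : K) ≠ 0) {f : B →* PGL(m, K)} (hf : Function.Injective f)
    (hcomm : IsMulCommutative (f.range.comap ProjGenLinGroup.mk)) (hpow : ∀ b : B, b ^ ℓ = 1) :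
    ENat.card B ≤ (ℓ ^ Fintype.card m : ℕ) := by
  have hℓ0 : ℓ ≠ 0 := by
    rintro rfl
    exact hℓ Nat.cast_zero
  have hexists (b : B) : ∃ g : GL m K, ProjGenLinGroup.mk g = f b ∧ g ^ ℓ = 1 :=
    exists_map_eq_and_pow_eq_one ProjGenLinGroup.ker_mk.le ProjGenLinGroup.mk_surjective
      (by simpa only [ProjGenLinGroup.ker_mk] using
        fun z ↦ exists_pow_eq_of_mem_center_generalLinearGroup hℓ0)
      (by rw [← map_pow, hpow, map_one])
  choose s hs hspow using hexists
  have hsinj : Function.Injective s := fun a b hab ↦ hf (by rw [← hs, ← hs, hab])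
  have hscomm (a b : B) : Commute (s a) (s b) :=
    setLike_mul_comm (s := f.range.comap ProjGenLinGroup.mk) ⟨a, (hs a).symm⟩ ⟨b, (hs b).symm⟩
  let lift (b : B) : End K (m → K) := Matrix.toLinAlgEquiv' (s b : Matrix m m K)
  have hlift_inj : Function.Injective lift :=
    Matrix.toLinAlgEquiv'.injective.comp (Units.val_injective.comp hsinj)
  simpa using enatCard_le_pow_finrank_of_pow_eq_one hℓ hlift_inj
    (fun a b _ ↦ (hscomm a b).units_val.map Matrix.toLinAlgEquiv')
    fun b ↦ by rw [← map_pow, ← Units.val_pow_eq_pow_val, hspow, Units.val_one, map_one]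

end ProjectiveGeneralLinear

section ProductOfCopies

variable {ι P : Type*} [DecidableEq ι] [Group P]

theorem closure_range_mulSingle_eq_top [Finite ι] {t : P} (ht : ∀ x, x ∈ Subgroup.zpowers t) :
    Subgroup.closure (Set.range fun i : ι ↦ Pi.mulSingle i t) = ⊤ := by
  refine (Subgroup.eq_top_iff' _).2 fun x ↦ Subgroup.pi_mem_of_mulSingle_mem x fun i ↦ ?_
  obtain ⟨k, hk⟩ := ht (x i)
  rw [← hk, Pi.mulSingle_zpow]
  exact zpow_mem (Subgroup.subset_closure (Set.mem_range_self i)) k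

theorem mulSingle_commutatorElement_eq {i k : ι} (hik : i ≠ k) (u v w : P) :
    (Pi.mulSingle i ⁅u, v⁆ : ι → P) =
      ⁅(Pi.mulSingle i u * Pi.mulSingle k w : ι → P), Pi.mulSingle i v⁆ := by
  have hk : Commute (Pi.mulSingle k w : ι → P) (Pi.mulSingle i v) :=
    Pi.mulSingle_commute (f := fun _ ↦ P) hik.symm w v
  rw [commutatorElement_mul_left_eq_conj_mul, commutatorElement_eq_one_iff_commute.2 hk,
    mul_one, mul_inv_cancel, one_mul]
  exact map_commutatorElement (MonoidHom.mulSingle (fun _ : ι ↦ P) i) u v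

theorem mulSingle_commutatorElement_mem {X : Subgroup (ι → P)} {i k : ι} (hik : i ≠ k) {u v w : P}
    (hu : Pi.mulSingle i u * Pi.mulSingle k w ∈ X) (hv : Pi.mulSingle i v ∈ X) :
    Pi.mulSingle i ⁅u, v⁆ ∈ X := by
  rw [mulSingle_commutatorElement_eq hik u v w]
  exact ⁅(⟨_, hu⟩ : X), (⟨_, hv⟩ : X)⁆.2

variable {E Q : Type*} [Group E] [Group Q] {π : E →* Q} {X : Subgroup (ι → P)}
  {φ : X →* Q} {u v : P}

theorem commute_of_map_eq_mulSingle_commutatorElement (hker : π.ker ≤ Subgroup.center E)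
    (hπ : Function.Surjective π) (hι : 3 ≤ ENat.card ι)
    (hu : ∀ i k, i ≠ k → Pi.mulSingle i u * Pi.mulSingle k u ∈ X) (hv : ∀ i, Pi.mulSingle i v ∈ X)
    {x y : X} {i j : ι} (hij : i ≠ j) {w : P} (hx : (x : ι → P) = Pi.mulSingle i ⁅u, v⁆)
    (hy : (y : ι → P) = Pi.mulSingle j w) {g h : E} (hg : π g = φ x) (hh : π h = φ y) :
    Commute g h := by
  obtain ⟨k, hki, hkj⟩ : ∃ k, k ≠ i ∧ k ≠ j :=
    ENat.exists_ne_ne_of_three_le hι i j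
  let a : X := ⟨_, hu i k hki.symm⟩
  let b : X := ⟨_, hv i⟩
  have hxab : x = ⁅a, b⁆ :=
    Subtype.ext (hx.trans (mulSingle_commutatorElement_eq hki.symm u v u))
  have hcomm {l : ι} (hl : l ≠ j) (q : P) : Commute (Pi.mulSingle l q : ι → P) y := by
    rw [hy]
    exact Pi.mulSingle_commute (f := fun _ ↦ P) hl q w
  have hay : Commute a y := Subtype.ext ((hcomm hij u).mul_left (hcomm hkj u))
  have hby : Commute b y := Subtype.ext (hcomm hij v)
  refine commute_of_map_eq_commutatorElement hker hπ (x := φ a) (y := φ b) ?_ ?_ ?_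
  · rw [hg, hxab, map_commutatorElement]
  · exact hh ▸ hay.map φ
  · exact hh ▸ hby.map φ

theorem exists_injective_isMulCommutative_comap_range [Finite ι]
    (hker : π.ker ≤ Subgroup.center E) (hπ : Function.Surjective π) (hι : 3 ≤ ENat.card ι)
    (hφ : Function.Injective φ)
    (hu : ∀ i k, i ≠ k → Pi.mulSingle i u * Pi.mulSingle k u ∈ X)
    (hv : ∀ i, Pi.mulSingle i v ∈ X) :
    ∃ f : (ι → Subgroup.zpowers ⁅u, v⁆) →* Q,
      Function.Injective f ∧ IsMulCommutative (f.range.comap π) := by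
  let t : Subgroup.zpowers ⁅u, v⁆ := ⟨⁅u, v⁆, Subgroup.mem_zpowers _⟩
  have ht (x : Subgroup.zpowers ⁅u, v⁆) : x ∈ Subgroup.zpowers t := by
    obtain ⟨k, hk⟩ := Subgroup.mem_zpowers_iff.1 x.2
    exact ⟨k, Subtype.ext hk⟩
  let incl : (ι → Subgroup.zpowers ⁅u, v⁆) →* (ι → P) :=
    (Subgroup.zpowers ⁅u, v⁆).subtype.compLeft ι
  have hincl (i : ι) : incl (Pi.mulSingle i t) = Pi.mulSingle i ⁅u, v⁆ :=
    funext <| Pi.apply_mulSingle (fun _ ↦ Subtype.val) (fun _ ↦ rfl) i t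
  have hmem (x : ι → Subgroup.zpowers ⁅u, v⁆) : incl x ∈ X := by
    have htop : ⊤ ≤ X.comap incl := by
      rw [← closure_range_mulSingle_eq_top ht, Subgroup.closure_le]
      rintro _ ⟨i, rfl⟩
      obtain ⟨k, hki, -⟩ := ENat.exists_ne_ne_of_three_le hι i i
      rw [SetLike.mem_coe, Subgroup.mem_comap, hincl]
      exact mulSingle_commutatorElement_mem hki.symm (hu i k hki.symm) (hv i)
    exact htop (Subgroup.mem_top x)
  let f : (ι → Subgroup.zpowers ⁅u, v⁆) →* Q := φ.comp (incl.codRestrict X hmem)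
  have hf : Function.Injective f := hφ.comp fun x y hxy ↦
    (Subtype.val_injective.comp_left : Function.Injective incl) (congr_arg Subtype.val hxy)
  have hrange : f.range = Subgroup.closure (Set.range fun i ↦ f (Pi.mulSingle i t)) := by
    rw [MonoidHom.range_eq_map, ← closure_range_mulSingle_eq_top ht, MonoidHom.map_closure,
      ← Set.range_comp]
    rfl
  refine ⟨f, hf, hrange ▸ isMulCommutative_comap_closure hker hπ ?_⟩
  rintro g h ⟨i, hi⟩ ⟨j, hj⟩ hgh
  have hij : i ≠ j := by
    rintro rfl
    exact hgh (hi.symm.trans hj)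
  exact commute_of_map_eq_mulSingle_commutatorElement hker hπ hι hu hv hij (hincl i) (hincl j)
    hi.symm hj.symm

end ProductOfCopies

section BlockPermutations

variable {ι α : Type*}

/-- Families of permutations of `α` indexed by `ι`, acting on `ι × α` blockwise: the `i`-th member
permutes the block `{i} × α`. -/
@[simps]
def blockPermHom (ι α : Type*) : (ι → Equiv.Perm α) →* Equiv.Perm (ι × α) where
  toFun := Equiv.prodCongrRight
  map_one' := rfl
  map_mul' _ _ := rfl

theorem blockPermHom_injective : Function.Injective (blockPermHom ι α) := fun _ _ h ↦
  funext fun i ↦ Equiv.ext fun a ↦ congr_arg Prod.snd (Equiv.congr_fun h (i, a))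

variable [Fintype ι] [DecidableEq ι] [Fintype α] [DecidableEq α]

theorem blockPermHom_mem_alternatingGroup_iff {x : ι → Equiv.Perm α} :
    blockPermHom ι α x ∈ alternatingGroup (ι × α) ↔ ∏ i, Equiv.Perm.sign (x i) = 1 := by
  rw [Equiv.Perm.mem_alternatingGroup, blockPermHom_apply, Equiv.Perm.sign_prodCongrRight]

theorem prod_sign_mulSingle (i : ι) (u : Equiv.Perm α) :
    ∏ j, Equiv.Perm.sign ((Pi.mulSingle i u : ι → Equiv.Perm α) j) = Equiv.Perm.sign u := by
  rw [Finset.prod_eq_single i (fun j _ hj ↦ by simp [hj]) (by simp), Pi.mulSingle_eq_same]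

theorem card_le_card_of_injective_alternatingGroup_prod {K m : Type*} [Field K] [IsAlgClosed K]
    [Fintype m] [DecidableEq m] (hι : 3 ≤ Fintype.card ι)
    {φ : alternatingGroup (ι × α) →* PGL(m, K)} (hφ : Function.Injective φ) {u v : Equiv.Perm α}
    (hv : Equiv.Perm.sign v = 1) (huv : ⁅u, v⁆ ≠ 1) (hK : (orderOf ⁅u, v⁆ : K) ≠ 0) :
    Fintype.card ι ≤ Fintype.card m := by
  let X := (alternatingGroup (ι × α)).comap (blockPermHom ι α)
  let ψ : X →* PGL(m, K) := φ.comp ((blockPermHom ι α).subgroupComap _)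
  have hψ : Function.Injective ψ := hφ.comp fun _ _ hxy ↦
    Subtype.ext (blockPermHom_injective (congr_arg Subtype.val hxy))
  have huX (i k : ι) (_ : i ≠ k) : Pi.mulSingle i u * Pi.mulSingle k u ∈ X :=
    blockPermHom_mem_alternatingGroup_iff.2 <| by
      simp only [Pi.mul_apply, map_mul, Finset.prod_mul_distrib, prod_sign_mulSingle,
        Int.units_mul_self]
  have hvX (i : ι) : Pi.mulSingle i v ∈ X :=
    blockPermHom_mem_alternatingGroup_iff.2 ((prod_sign_mulSingle i v).trans hv)
  obtain ⟨f, hf, hcomm⟩ := exists_injective_isMulCommutative_comap_range ProjGenLinGroup.ker_mk.le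
    ProjGenLinGroup.mk_surjective (by simpa using hι) hψ huX hvX
  have hpow (x : ι → Subgroup.zpowers ⁅u, v⁆) : x ^ orderOf ⁅u, v⁆ = 1 :=
    funext fun i ↦ by rw [Pi.pow_apply, ← Nat.card_zpowers, pow_card_eq_one', Pi.one_apply]
  have hcard := enatCard_le_pow_card_of_injective_projGenLinGroup hK hf hcomm hpow
  rw [ENat.card_eq_coe_natCard, Nat.card_fun, Nat.card_zpowers, Nat.card_eq_fintype_card,
    Nat.cast_le] at hcard
  refine (Nat.pow_le_pow_iff_right ?_).1 hcard
  exact lt_of_le_of_ne (orderOf_pos _) (Ne.symm (orderOf_eq_one_iff.not.2 huv))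

end BlockPermutations

open Equiv Equiv.Perm in
theorem exists_perm_four_orderOf_commutatorElement_cast_ne_zero (R : Type*)
    [AddMonoidWithOne R] [NeZero (1 : R)] :
    ∃ u v : Perm (Fin 4), sign v = 1 ∧ ⁅u, v⁆ ≠ 1 ∧ (orderOf ⁅u, v⁆ : R) ≠ 0 := by
  by_cases h2 : (2 : R) = 0
  · have hcomm : ⁅(c[0, 1] : Perm (Fin 4)), (c[0, 1, 2] : Perm (Fin 4))⁆ = c[0, 1, 2] := by decide
    have horder : orderOf (c[0, 1, 2] : Perm (Fin 4)) = 3 :=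
      orderOf_eq_prime (by decide) (by decide)
    refine ⟨c[0, 1], c[0, 1, 2], by decide, by decide, ?_⟩
    rw [hcomm, horder, Nat.cast_ofNat, ← two_add_one_eq_three, h2, zero_add]
    exact one_ne_zero
  · have hcomm : ⁅(c[0, 1] : Perm (Fin 4)), (c[0, 2] * c[1, 3] : Perm (Fin 4))⁆ =
        c[0, 1] * c[2, 3] := by decide
    have horder : orderOf (c[0, 1] * c[2, 3] : Perm (Fin 4)) = 2 :=
      orderOf_eq_prime (by decide) (by decide)
    refine ⟨c[0, 1], c[0, 2] * c[1, 3], by decide, by decide, ?_⟩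
    rwa [hcomm, horder, Nat.cast_ofNat]

theorem pgl_subgroup_iso_alternating_four_mul_general {F m : Type*} [Field F] [Fintype m]
    [DecidableEq m] {d : ℕ} {φ : alternatingGroup (Fin (4 * d)) →* PGL(m, F)}
    (hφ : Function.Injective φ) : d ≤ Fintype.card m := by
  obtain rfl | hd := Nat.eq_zero_or_pos d
  · exact Nat.zero_le _
  have : Nontrivial (alternatingGroup (Fin (4 * d))) :=
    alternatingGroup.nontrivial_of_three_le_card (by rw [Nat.card_fin]; lia)
  have hm : 1 < Fintype.card m := by
    refine Fintype.one_lt_card_iff_nontrivial.2 (not_subsingleton_iff_nontrivial.1 fun _ ↦ ?_)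
    have := subsingleton_projGenLinGroup (m := m) F
    exact not_subsingleton (alternatingGroup (Fin (4 * d))) hφ.subsingleton
  obtain hd3 | hd3 := lt_or_ge d 3
  · exact (Nat.le_of_lt_succ hd3).trans hm
  obtain ⟨u, v, hv, huv, horder⟩ :=
    exists_perm_four_orderOf_commutatorElement_cast_ne_zero (AlgebraicClosure F)
  let e : Fin d × Fin 4 ≃ Fin (4 * d) := (Equiv.prodComm _ _).trans finProdFinEquiv
  let ψ : alternatingGroup (Fin d × Fin 4) →* PGL(m, AlgebraicClosure F) :=
    ((ProjGenLinGroup.map (algebraMap F _)).comp φ).comp e.altCongrHom.toMonoidHom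
  have hψ : Function.Injective ψ :=
    ((projGenLinGroup_map_injective (algebraMap F _).injective).comp hφ).comp
      e.altCongrHom.injective
  simpa only [Fintype.card_fin] using
    card_le_card_of_injective_alternatingGroup_prod (by simpa using hd3) hψ hv huv horder

/-- If a subgroup `H` of `PGL(n, F)` (the quotient of `GL(n, F)` by its
center) over a finite field `F` is isomorphic to the alternating group `A_{4*d₁}`,
`d₁ ≥ 1`, then `n ≥ d₁`. -/
theorem pgl_subgroup_iso_alternating_four_mul (F : Type*) [Field F] [Fintype F]
    (n d₁ : ℕ) (hd₁ : 0 < d₁)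
    (H : Subgroup (Matrix.GeneralLinearGroup (Fin n) F ⧸
      Subgroup.center (Matrix.GeneralLinearGroup (Fin n) F)))
    (h : Nonempty (H ≃* alternatingGroup (Fin (4 * d₁)))) :
    d₁ ≤ n := by
  obtain ⟨e⟩ := h
  simpa using pgl_subgroup_iso_alternating_four_mul_general
    (φ := H.subtype.comp e.symm.toMonoidHom) (H.subtype_injective.comp e.symm.injective)
end

section
/- For d ≥ 9, any injective group homomorphism α : A_d → A_{d+2} is conjugate (by an element of S_{d+2}) to the standard embedding; equivalently, α maps every 3-cycle of A_d to a 3-cycle of A_{d+2}. -/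
/-!
Let `f` be a nontrivial action of `A_γ` on `Ω`, with `|γ| ≥ 8` and `|Ω| ≤ |γ| + 2`. A 3-cycle `x`
commutes with the alternating group `B` of the complement of its support. If `f x`, which has
order 3, were a product of at least two 3-cycles, then its cycles and its fixed points would both
be fewer than `|γ| - 3`, so `B` would permute neither nontrivially; what remains of the centralizer
of `f x` is abelian, and the perfect group `B` would act trivially. So `f x` is a 3-cycle.

Fix `p ≠ q`. The products of two distinct 3-cycles `(p q k)` have order 2, and this forces their
images to share a directed edge `x → y`: the image of `(p q k)` is `(x y z_k)`. As the `(p q k)`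
generate `A_γ`, `f` is the extension along the embedding `p ↦ x`, `q ↦ y`, `k ↦ z_k`, and any two
embeddings of `γ` in `Ω` differ by a permutation of `Ω`.
-/

open Equiv Equiv.Perm

section Group

variable {G : Type*} [Group G]

theorem monoidHom_injective_iff_ne_one [IsSimpleGroup G] {H : Type*} [Group H] {f : G →* H} :
    Function.Injective f ↔ f ≠ 1 := by
  rw [← f.ker_eq_bot_iff, Ne, ← f.ker_eq_top_iff]
  exact ⟨fun h => h ▸ bot_ne_top, f.normal_ker.eq_bot_or_eq_top.resolve_right⟩

open scoped IsMulCommutative in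
theorem monoidHom_eq_one_of_isPerfect [Group.IsPerfect G] {A : Type*} [Group A]
    [IsMulCommutative A] (f : G →* A) : f = 1 := by
  rw [← f.ker_eq_top_iff, eq_top_iff, ← Group.IsPerfect.commutator_eq_top (G := G)]
  exact Abelianization.commutator_subset_ker f

end Group

section AlternatingGroupHom

variable {γ Ω : Type*} [Fintype γ] [DecidableEq γ] [Fintype Ω]

theorem alternatingGroup_hom_eq_one_of_card_lt (hγ : 5 ≤ Fintype.card γ)
    (hΩ : Fintype.card Ω < Fintype.card γ) (f : alternatingGroup γ →* Perm Ω) : f = 1 := by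
  classical
  have := alternatingGroup.isSimpleGroup (α := γ) (by simpa using hγ)
  have : Nontrivial γ := Fintype.one_lt_card_iff_nontrivial.mp (by lia)
  obtain ⟨n, hn⟩ : ∃ n, Fintype.card γ = n + 1 := ⟨Fintype.card γ - 1, by lia⟩
  by_contra hf
  have hinj := monoidHom_injective_iff_ne_one.mpr hf
  have hcard : (n + 1) * n.factorial ≤ 2 * n.factorial :=
    calc (n + 1) * n.factorial = 2 * Fintype.card (alternatingGroup γ) := by
          rw [two_mul_card_alternatingGroup, Fintype.card_perm, hn, Nat.factorial_succ]
      _ ≤ 2 * (Fintype.card Ω).factorial := by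
          rw [← Fintype.card_perm]
          exact Nat.mul_le_mul_left 2 (Fintype.card_le_of_injective f hinj)
      _ ≤ 2 * n.factorial := Nat.mul_le_mul_left 2 (Nat.factorial_le (by lia))
  have := Nat.le_of_mul_le_mul_right hcard n.factorial_pos
  lia

variable [DecidableEq Ω]

theorem alternatingGroup_hom_eq_one_of_commute (hγ : 5 ≤ Fintype.card γ) {s : Perm Ω}
    (hcycles : s.cycleFactorsFinset.card < Fintype.card γ)
    (hfixed : Fintype.card (Function.fixedPoints s) < Fintype.card γ)
    (f : alternatingGroup γ →* Perm Ω) (hs : ∀ x, Commute (f x) s) : f = 1 := by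
  have : Group.IsPerfect (alternatingGroup γ) :=
    ⟨commutator_alternatingGroup_eq_top (by simpa using hγ)⟩
  let F : alternatingGroup γ →* Subgroup.centralizer {s} :=
    f.codRestrict _ fun x => Subgroup.mem_centralizer_singleton_iff.mpr (hs x)
  have hF : (OnCycleFactors.toPermHom s).comp F = 1 :=
    alternatingGroup_hom_eq_one_of_card_lt hγ (by rwa [Fintype.card_coe]) _
  have hker (x) : f x ∈ (OnCycleFactors.kerParam s).range := by
    rw [OnCycleFactors.kerParam_range_eq]
    exact ⟨F x, DFunLike.congr_fun hF x, rfl⟩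
  have hinj := OnCycleFactors.kerParam_injective s
  -- The two components of `φ` are the action on the fixed points of `s` and, cycle by cycle,
  -- the powers of the cycles of `s`.
  let φ := (MonoidHom.ofInjective hinj).symm.toMonoidHom.comp (f.codRestrict _ hker)
  have hf : f = (OnCycleFactors.kerParam s).comp φ :=
    MonoidHom.ext fun x => (MonoidHom.apply_ofInjective_symm hinj ⟨_, hker x⟩).symm
  have hfst : (MonoidHom.fst _ _).comp φ = 1 :=
    alternatingGroup_hom_eq_one_of_card_lt hγ hfixed _
  have hsnd : (MonoidHom.snd _ _).comp φ = 1 := monoidHom_eq_one_of_isPerfect _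
  have hφ : φ = 1 := MonoidHom.ext fun x =>
    Prod.ext (DFunLike.congr_fun hfst x) (DFunLike.congr_fun hsnd x)
  rw [hf, hφ, MonoidHom.comp_one]

theorem isThreeCycle_of_commute_alternatingGroup_hom (hγ : 5 ≤ Fintype.card γ)
    (hΩ : Fintype.card Ω ≤ Fintype.card γ + 5) {f : alternatingGroup γ →* Perm Ω} (hf : f ≠ 1)
    {s : Perm Ω} (hord : orderOf s = 3) (hs : ∀ x, Commute (f x) s) : s.IsThreeCycle := by
  obtain ⟨n, hn⟩ := cycleType_prime_order (σ := s) (hord ▸ Nat.prime_three)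
  rw [hord] at hn
  rcases Nat.eq_zero_or_pos n with rfl | hpos
  · exact hn
  have hmoved : s.cycleType.sum = 3 * (n + 1) := by
    rw [hn, Multiset.sum_replicate, smul_eq_mul, mul_comm]
  have hcycles : s.cycleFactorsFinset.card = n + 1 := by
    simpa [cycleType_def] using congrArg Multiset.card hn
  have hle := s.sum_cycleType_le
  have hfixed := s.card_fixedPoints
  exact absurd (alternatingGroup_hom_eq_one_of_commute hγ (by lia) (by lia) f hs) hf

theorem isThreeCycle_alternatingGroup_hom_apply (hγ : 8 ≤ Fintype.card γ)
    (hΩ : Fintype.card Ω ≤ Fintype.card γ + 2) {f : alternatingGroup γ →* Perm Ω}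
    (hf : Function.Injective f) {x : alternatingGroup γ} (hx : (x : Perm γ).IsThreeCycle) :
    (f x).IsThreeCycle := by
  let B : Finset γ := (x : Perm γ).supportᶜ
  have hB : Fintype.card B = Fintype.card γ - 3 := by
    rw [Fintype.card_coe, Finset.card_compl, hx.card_support]
  have : IsSimpleGroup (alternatingGroup B) :=
    alternatingGroup.isSimpleGroup (by rw [Nat.card_eq_fintype_card]; lia)
  have hne : f.comp (alternatingGroup.ofSubtype B) ≠ 1 :=
    monoidHom_injective_iff_ne_one.mp (hf.comp alternatingGroup.ofSubtype_injective)
  have hord : orderOf (f x) = 3 := by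
    rw [orderOf_injective f hf, ← Subgroup.orderOf_coe, hx.orderOf]
  have hcomm (y : alternatingGroup B) : Commute (alternatingGroup.ofSubtype B y) x := by
    refine Subtype.ext (Disjoint.commute (disjoint_iff_disjoint_support.mpr ?_)).eq
    exact Finset.disjoint_of_subset_left
      ((alternatingGroup.mem_range_ofSubtype_iff B _).mp ⟨y, rfl⟩) disjoint_compl_left
  exact isThreeCycle_of_commute_alternatingGroup_hom (by lia) (by lia) hne hord
    fun y => (hcomm y).map f

end AlternatingGroupHom

section ThreeCycles

variable {Ω : Type*} [Fintype Ω] [DecidableEq Ω] {s t u : Perm Ω}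

theorem apply_apply_apply_of_isThreeCycle (hs : s.IsThreeCycle) (z : Ω) : s (s (s z)) = z := by
  have h : s ^ 3 = 1 := hs.orderOf ▸ pow_orderOf_eq_one s
  simpa [pow_succ] using DFunLike.congr_fun h z

theorem eq_or_eq_or_eq_of_isThreeCycle (hs : s.IsThreeCycle) {x z : Ω} (hx : s x ≠ x)
    (hz : s z ≠ z) : z = x ∨ z = s x ∨ z = s (s x) := by
  rw [← mem_support] at hx hz
  simpa [hs.support_eq_iff_mem_support.mpr hx] using hz

theorem exists_apply_eq_apply_of_orderOf_mul (hs : s.IsThreeCycle) (ht : t.IsThreeCycle)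
    (hst : orderOf (s * t) = 2) : ∃ x, s x ≠ x ∧ t x = s x := by
  obtain ⟨hsq, hne⟩ := orderOf_eq_prime_iff.mp hst
  by_cases hfix : ∃ z, s z ≠ z ∧ t z = z
  · obtain ⟨z, hsz, htz⟩ := hfix
    have hz : s (t (s z)) = z := by simpa [pow_two, htz] using DFunLike.congr_fun hsq z
    exact ⟨s z, s.injective.ne hsz,
      s.injective (hz.trans (apply_apply_apply_of_isThreeCycle hs z).symm)⟩
  · push Not at hfix
    have hsupp : s.support = t.support := Finset.eq_of_subset_of_card_le
      (fun z => by simpa using hfix z) (by rw [hs.card_support, ht.card_support])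
    by_contra! hdiff
    -- On their common support `s` and `t` never agree, so they are inverse to each other.
    refine hne (Perm.ext fun z => ?_)
    rw [mul_apply, one_apply]
    by_cases hz : s z = z
    · have htz : t z = z := by rwa [← notMem_support, ← hsupp, notMem_support]
      rw [htz, hz]
    · have htz : s (t z) ≠ t z := by
        rw [← mem_support, hsupp, mem_support]
        exact t.injective.ne (hfix z hz)
      have ht_eq : t z = s (s z) := by
        have := eq_or_eq_or_eq_of_isThreeCycle hs hz htz
        exact (this.resolve_left (hfix z hz)).resolve_left (hdiff z hz)
      rw [ht_eq, apply_apply_apply_of_isThreeCycle hs]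

theorem apply_eq_apply_of_orderOf_mul (hs : s.IsThreeCycle) (ht : t.IsThreeCycle)
    (hu : u.IsThreeCycle) (hst : orderOf (s * t) = 2) (hsu : orderOf (s * u) = 2)
    (htu : orderOf (t * u) = 2) {x : Ω} (hx : s x ≠ x) (htx : t x = s x) : u x = s x := by
  obtain ⟨a, hsa, hua⟩ := exists_apply_eq_apply_of_orderOf_mul hs hu hsu
  obtain ⟨b, htb, hub⟩ := exists_apply_eq_apply_of_orderOf_mul ht hu htu
  have hne : s (s x) ≠ t (t x) := by
    intro h
    have hsq : s (t (s (t x))) = x := by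
      have hone : (s * t) ^ 2 = 1 := hst ▸ pow_orderOf_eq_one (s * t)
      simpa [pow_two] using DFunLike.congr_fun hone x
    exact hx (by rwa [htx, h, apply_apply_apply_of_isThreeCycle ht] at hsq)
  -- With `s = (x y z)` and `t = (x y w)`, if `a` and `b` both differ from `x`, then `u` would
  -- take two values at one point, one value at two points, or move all of `x`, `y`, `z`, `w`.
  have ha := eq_or_eq_or_eq_of_isThreeCycle hs hx hsa
  have hb := eq_or_eq_or_eq_of_isThreeCycle ht (htx ▸ hx) htb
  have hab := eq_or_eq_or_eq_of_isThreeCycle hu (hua ▸ hsa) (hub ▸ htb)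
  grind [apply_apply_apply_of_isThreeCycle hs x, apply_apply_apply_of_isThreeCycle ht x,
    apply_apply_apply_of_isThreeCycle hu a]

theorem exists_forall_eq_swap_mul_swap {ι : Type*} [Nontrivial ι] {s : ι → Perm Ω}
    (hs : ∀ i, (s i).IsThreeCycle) (hmul : Pairwise fun i j => orderOf (s i * s j) = 2) :
    ∃ (x y : Ω) (z : ι → Ω),
      x ≠ y ∧ ∀ i, z i ≠ x ∧ z i ≠ y ∧ s i = swap x y * swap y (z i) := by
  obtain ⟨i, j, hij⟩ := exists_pair_ne ι
  obtain ⟨x, hx, hjx⟩ := exists_apply_eq_apply_of_orderOf_mul (hs i) (hs j) (hmul hij)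
  have hedge (k) : s k x = s i x := by
    rcases eq_or_ne i k with rfl | hik
    · rfl
    rcases eq_or_ne j k with rfl | hjk
    · exact hjx
    exact apply_eq_apply_of_orderOf_mul (hs i) (hs j) (hs k) (hmul hij) (hmul hik) (hmul hjk) hx hjx
  refine ⟨x, s i x, fun k => s k (s i x), hx.symm, fun k => ?_⟩
  have hkx : x ∈ (s k).support := by rwa [mem_support, hedge]
  have hnodup := (hs k).nodup_iff_mem_support.mpr hkx
  have hprod := (hs k).eq_swap_mul_swap_iff_mem_support.mpr hkx
  rw [hedge] at hnodup hprod
  exact ⟨by grind, by grind, hprod⟩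

end ThreeCycles

section Generation

variable {γ : Type*} [Finite γ] [DecidableEq γ]

theorem closure_range_swap (q : γ) : Subgroup.closure (Set.range (swap q)) = ⊤ := by
  rw [eq_top_iff, ← closure_isSwap, Subgroup.closure_le]
  rintro _ ⟨a, b, -, rfl⟩
  have hq (c) : swap q c ∈ Subgroup.closure (Set.range (swap q)) :=
    Subgroup.subset_closure ⟨c, rfl⟩
  exact SubmonoidClass.swap_mem_trans _ (swap_comm q a ▸ hq a) (hq b)

theorem mem_or_swap_mul_mem {p q : γ} {H : Subgroup (Perm γ)}
    (hH : ∀ k, k ≠ p → k ≠ q → swap p q * swap q k ∈ H) (σ : Perm γ) :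
    σ ∈ H ∨ swap p q * σ ∈ H := by
  have hstep (k : γ) {τ : Perm γ} (hτ : τ ∈ H ∨ swap p q * τ ∈ H) :
      swap q k * τ ∈ H ∨ swap p q * (swap q k * τ) ∈ H := by
    rcases eq_or_ne k q with rfl | hkq
    · simpa [← Perm.one_def] using hτ
    rcases eq_or_ne k p with rfl | hkp
    · simpa [swap_comm q k, or_comm] using hτ
    have hk := hH k hkp hkq
    refine hτ.symm.imp (fun h => ?_) (fun h => ?_)
    · rwa [← H.mul_mem_cancel_left hk, mul_assoc, swap_mul_self_mul]
    · rw [← mul_assoc]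
      exact H.mul_mem hk h
  have hσ : σ ∈ Subgroup.closure (Set.range (swap q)) :=
    closure_range_swap q ▸ Subgroup.mem_top σ
  induction hσ using Subgroup.closure_induction_left with
  | one => exact Or.inl H.one_mem
  | mul_left _ hs _ _ ih =>
    obtain ⟨k, rfl⟩ := hs
    exact hstep k ih
  | inv_mul_cancel _ hs _ _ ih =>
    obtain ⟨k, rfl⟩ := hs
    exact swap_inv q k ▸ hstep k ih

end Generation

section PivotCycle

variable {γ : Type*} [Fintype γ] [DecidableEq γ] {p q : γ}

/-- The 3-cycle `p ↦ q ↦ k ↦ p` as an element of the alternating group. With `p` and `q` fixed,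
these generate the alternating group, and the product of any two distinct ones has order 2. -/
def pivotCycle (hpq : p ≠ q) (k : {k // k ≠ p ∧ k ≠ q}) : alternatingGroup γ :=
  ⟨swap p q * swap q k,
    mul_mem_alternatingGroup_of_isSwap ⟨p, q, hpq, rfl⟩ ⟨q, k, k.2.2.symm, rfl⟩⟩

theorem isThreeCycle_pivotCycle (hpq : p ≠ q) (k : {k // k ≠ p ∧ k ≠ q}) :
    (pivotCycle hpq k : Perm γ).IsThreeCycle := by
  have h := isThreeCycle_swap_mul_swap_same hpq.symm k.2.2.symm k.2.1.symm
  rwa [swap_comm q p] at h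

theorem pivotCycle_injective (hpq : p ≠ q) : Function.Injective (pivotCycle hpq) := by
  intro k l h
  have hswap : swap q (k : γ) = swap q l := mul_left_cancel (congrArg Subtype.val h)
  simpa [Subtype.ext_iff] using DFunLike.congr_fun hswap q

theorem orderOf_pivotCycle_mul (hpq : p ≠ q) {k l : {k // k ≠ p ∧ k ≠ q}} (hkl : k ≠ l) :
    orderOf (pivotCycle hpq k * pivotCycle hpq l) = 2 := by
  have hprod : (pivotCycle hpq k * pivotCycle hpq l : Perm γ) = swap p k * swap q l := by
    rw [← swap_mul_swap_mul_swap k.2.2 k.2.1, swap_comm q p, swap_comm (k : γ) q]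
    simp only [pivotCycle, mul_assoc]
  have hdisj : Disjoint (swap p (k : γ)) (swap q l) := disjoint_swap_swap <| by
    simp [hpq, k.2.1.symm, k.2.2, l.2.1.symm, l.2.2.symm, Subtype.coe_ne_coe.mpr hkl]
  have hp : IsSwap (swap p (k : γ)) := ⟨p, k, k.2.1.symm, rfl⟩
  have hq : IsSwap (swap q (l : γ)) := ⟨q, l, l.2.2.symm, rfl⟩
  rw [← Subgroup.orderOf_coe, Subgroup.coe_mul, hprod, hdisj.orderOf, hp.orderOf, hq.orderOf,
    Nat.lcm_self]

theorem closure_range_pivotCycle (hpq : p ≠ q) :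
    Subgroup.closure (Set.range (pivotCycle hpq)) = ⊤ := by
  rw [eq_top_iff]
  intro x _
  let H := (Subgroup.closure (Set.range (pivotCycle hpq))).map (alternatingGroup γ).subtype
  have hH (k) (hkp : k ≠ p) (hkq : k ≠ q) : swap p q * swap q k ∈ H :=
    ⟨pivotCycle hpq ⟨k, hkp, hkq⟩, Subgroup.subset_closure ⟨_, rfl⟩, rfl⟩
  rcases mem_or_swap_mul_mem hH x with ⟨y, hy, hyx⟩ | ⟨y, -, hyx⟩
  · rwa [← Subtype.ext hyx]
  · have hodd : swap p q ∈ alternatingGroup γ :=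
      (Subgroup.mul_mem_cancel_right _ x.2).mp (hyx ▸ y.2)
    simp [mem_alternatingGroup, sign_swap hpq] at hodd

end PivotCycle

section Embedding

variable {γ Ω : Type*}

theorem viaEmbedding_swap [DecidableEq γ] [DecidableEq Ω] (e : γ ↪ Ω) (a b : γ) :
    (swap a b).viaEmbedding e = swap (e a) (e b) := by
  ext z
  by_cases hz : z ∈ Set.range e
  · obtain ⟨c, rfl⟩ := hz
    rw [viaEmbedding_apply, e.injective.swap_apply]
  · rw [viaEmbedding_apply_of_notMem _ _ _ hz, swap_apply_of_ne_of_ne] <;>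
    · rintro rfl
      exact hz ⟨_, rfl⟩

theorem exists_viaEmbedding_eq_conj [Finite γ] (ι e : γ ↪ Ω) :
    ∃ g : Perm Ω, ∀ σ : Perm γ, σ.viaEmbedding e = g * σ.viaEmbedding ι * g⁻¹ := by
  obtain ⟨g, hg⟩ := Perm.exists_extending_pair ι e ι.injective e.injective
  refine ⟨g, fun σ => eq_mul_inv_of_mul_eq <| Perm.ext fun z => ?_⟩
  rw [mul_apply, mul_apply]
  by_cases hz : z ∈ Set.range ι
  · obtain ⟨c, rfl⟩ := hz
    rw [hg, viaEmbedding_apply, viaEmbedding_apply, hg]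
  · rw [viaEmbedding_apply_of_notMem _ _ _ hz, viaEmbedding_apply_of_notMem]
    rintro ⟨c, hc⟩
    exact hz ⟨c, g.injective ((hg c).trans hc)⟩

variable [Fintype γ] [DecidableEq γ] [DecidableEq Ω]

theorem eq_viaEmbedding_of_apply_pivotCycle {p q : γ} (hpq : p ≠ q)
    {f : alternatingGroup γ →* Perm Ω} {e : γ ↪ Ω}
    (hf : ∀ k, f (pivotCycle hpq k) = swap (e p) (e q) * swap (e q) (e k))
    (x : alternatingGroup γ) : f x = (x : Perm γ).viaEmbedding e := by
  suffices f = (viaEmbeddingHom e).comp (alternatingGroup γ).subtype from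
    DFunLike.congr_fun this x
  refine MonoidHom.eq_of_eqOn_dense (closure_range_pivotCycle hpq) ?_
  rintro _ ⟨k, rfl⟩
  rw [hf, ← viaEmbedding_swap, ← viaEmbedding_swap]
  exact (map_mul (viaEmbeddingHom e) _ _).symm

theorem exists_eq_viaEmbedding_of_isThreeCycle [Fintype Ω] (hγ : 4 ≤ Fintype.card γ)
    {f : alternatingGroup γ →* Perm Ω} (hf : Function.Injective f)
    (h3 : ∀ x : alternatingGroup γ, (x : Perm γ).IsThreeCycle → (f x).IsThreeCycle) :
    ∃ e : γ ↪ Ω, ∀ x : alternatingGroup γ, f x = (x : Perm γ).viaEmbedding e := by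
  have : Nontrivial γ := Fintype.one_lt_card_iff_nontrivial.mp (by lia)
  obtain ⟨p, q, hpq⟩ := exists_pair_ne γ
  have : Nontrivial {k // k ≠ p ∧ k ≠ q} := by
    have hcard : 1 < ({p, q}ᶜ : Finset γ).card := by
      rw [Finset.card_compl, Finset.card_pair hpq]
      lia
    obtain ⟨k, hk, l, hl, hkl⟩ := Finset.one_lt_card.mp hcard
    exact ⟨⟨k, by simpa using hk⟩, ⟨l, by simpa using hl⟩, by simpa using hkl⟩
  obtain ⟨x, y, z, hxy, hz⟩ :=
    exists_forall_eq_swap_mul_swap (fun k => h3 _ (isThreeCycle_pivotCycle hpq k)) fun k l hkl => by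
      simp only [← map_mul, orderOf_injective f hf, orderOf_pivotCycle_mul hpq hkl]
  have hzinj : Function.Injective z := fun k l hkl => pivotCycle_injective hpq <| hf <| by
    rw [(hz k).2.2, (hz l).2.2, hkl]
  let e (k : γ) : Ω := if h : k ≠ p ∧ k ≠ q then z ⟨k, h⟩ else if k = p then x else y
  have he : Function.Injective e := by grind [Function.Injective]
  refine ⟨⟨e, he⟩, eq_viaEmbedding_of_apply_pivotCycle hpq fun k => ?_⟩
  simp [e, hpq.symm, k.2, (hz k).2.2]

end Embedding

theorem alternating_embedding_conj_standard_general {γ Ω : Type*} [Fintype γ] [DecidableEq γ]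
    [Fintype Ω] [DecidableEq Ω] (hγ : 8 ≤ Fintype.card γ)
    (hΩ : Fintype.card Ω ≤ Fintype.card γ + 2) {f : alternatingGroup γ →* Perm Ω} (hf : f ≠ 1)
    (ι : γ ↪ Ω) :
    (∃ g : Perm Ω, ∀ x : alternatingGroup γ,
      f x = g * (x : Perm γ).viaEmbedding ι * g⁻¹) ∧
    ∀ x : alternatingGroup γ, (x : Perm γ).IsThreeCycle → (f x).IsThreeCycle := by
  have := alternatingGroup.isSimpleGroup (α := γ) (by rw [Nat.card_eq_fintype_card]; lia)
  have hinj := monoidHom_injective_iff_ne_one.mpr hf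
  have h3 (x : alternatingGroup γ) (hx : (x : Perm γ).IsThreeCycle) :=
    isThreeCycle_alternatingGroup_hom_apply hγ hΩ hinj hx
  obtain ⟨e, he⟩ := exists_eq_viaEmbedding_of_isThreeCycle (by lia) hinj h3
  obtain ⟨g, hg⟩ := exists_viaEmbedding_eq_conj ι e
  exact ⟨⟨g, fun x => (he x).trans (hg x)⟩, h3⟩

/-- For `d ≥ 9`, every injective homomorphism `α : A_d → A_{d+2}` is
conjugate (by an element of `S_{d+2}`) to the standard embedding (extension of
permutations of `{1,…,d}` by the identity on the two extra letters); equivalently,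
`α` sends every 3-cycle to a 3-cycle. -/
theorem alternating_embedding_conj_standard (d : ℕ) (hd : 9 ≤ d)
    (α : alternatingGroup (Fin d) →* alternatingGroup (Fin (d + 2)))
    (hα : Function.Injective α) :
    (∃ g : Equiv.Perm (Fin (d + 2)),
      ∀ x : alternatingGroup (Fin d),
        ((α x : Equiv.Perm (Fin (d + 2)))) =
          g * (x : Equiv.Perm (Fin d)).viaEmbedding
            (Fin.castLEEmb (by omega : d ≤ d + 2)) * g⁻¹) ∧
    (∀ x : alternatingGroup (Fin d), (x : Equiv.Perm (Fin d)).IsThreeCycle →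
      ((α x : Equiv.Perm (Fin (d + 2)))).IsThreeCycle) := by
  have := alternatingGroup.isSimpleGroup (α := Fin d) (by rw [Nat.card_fin]; lia)
  have hf : (alternatingGroup _).subtype.comp α ≠ 1 :=
    monoidHom_injective_iff_ne_one.mp (Subtype.val_injective.comp hα)
  exact alternating_embedding_conj_standard_general (by rw [Fintype.card_fin]; lia) (by simp) hf _
end

section
/- Let G be a finite group containing S_d as a subgroup with d ≥ 7, and suppose S_d is a normal subgroup of G such that no proper subgroup of G strictly containing S_d exists other than S_d itself (minimality). Then G is isomorphic to the direct product S_d × Z/pZ for some prime p, where the factor Z/pZ is generated by an element commuting with all of S_d. -/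
/-!
The idea is that `S_d` is a complete group: its centre is trivial and, for `d ≠ 6`, all its
automorphisms are inner. Conjugation by `g ∈ G` therefore agrees on the normal subgroup `S_d` with
conjugation by some `s ∈ S_d`, so `s⁻¹ * g` centralizes `S_d`, and `G` is the direct product of
`S_d` and its centralizer `C ≃ G ⧸ S_d`. Minimality leaves `C` no subgroups besides `⊥` and `⊤`,
hence `C` is cyclic of prime order.

An automorphism of `S_d` preserves the orders of centralizers, and for `d ≠ 6` these single out the
transpositions among the involutions. The transpositions `(x y)` moving a given point `x` pairwise
do not commute, so neither do their images; these must then move a common point, and where the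
automorphism sends `(x y)` determines the conjugating permutation at `y`.
-/

open Equiv Equiv.Perm

/-- A group is complete if its centre is trivial and all its automorphisms are inner, so that
it is a direct factor of every group containing it as a normal subgroup. -/
structure IsCompleteGroup (N : Type*) [Group N] : Prop where
  center_eq_bot : Subgroup.center N = ⊥
  conj_surjective : Function.Surjective (MulAut.conj : N →* MulAut N)

section Groups

variable {G H : Type*} [Group G] [Group H]

theorem prime_card_of_isSimpleOrder_subgroup (G : Type*) [Group G] [IsSimpleOrder (Subgroup G)] :
    (Nat.card G).Prime := by
  have : Nontrivial G := Subgroup.nontrivial_iff.1 inferInstance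
  obtain ⟨g, hg⟩ := exists_ne (1 : G)
  have htop : Subgroup.zpowers g = ⊤ :=
    (eq_bot_or_eq_top _).resolve_left (Subgroup.zpowers_ne_bot.2 hg)
  have : IsCyclic G := ⟨g, (Subgroup.eq_top_iff' _).1 htop⟩
  have : IsSimpleGroup G := ⟨fun K _ => eq_bot_or_eq_top K⟩
  exact Group.is_simple_iff_prime_card.1 this

theorem prime_index_of_isCoatom {K : Subgroup G} [K.Normal] (hK : IsCoatom K) :
    K.index.Prime := by
  let e : Subgroup (G ⧸ K) ≃o Set.Ici K := QuotientGroup.comapMk'OrderIso K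
  have : IsSimpleOrder (Set.Ici K) := Set.isSimpleOrder_Ici_iff_isCoatom.2 hK
  have : IsSimpleOrder (Subgroup (G ⧸ K)) := e.isSimpleOrder
  exact prime_card_of_isSimpleOrder_subgroup (G ⧸ K)

theorem card_centralizer_map (f : G ≃* H) (g : G) :
    Nat.card (Subgroup.centralizer {f g}) = Nat.card (Subgroup.centralizer {g}) :=
  (Nat.card_congr <| f.toEquiv.subtypeEquiv fun k => by
    simp [Subgroup.mem_centralizer_singleton_iff, ← map_mul]).symm

end Groups

namespace IsCompleteGroup

variable {N M G : Type*} [Group N] [Group M] [Group G]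

theorem of_subsingleton [Subsingleton N] : IsCompleteGroup N where
  center_eq_bot := Subsingleton.elim _ _
  conj_surjective _ := ⟨1, MulEquiv.ext fun _ => Subsingleton.elim _ _⟩

theorem of_mulEquiv (hN : IsCompleteGroup N) (e : N ≃* M) : IsCompleteGroup M where
  center_eq_bot := by
    refine (Subgroup.eq_bot_iff_forall _).2 fun m hm => ?_
    have hcenter : e.symm m ∈ Subgroup.center N := Subgroup.mem_center_iff.2 fun n =>
      e.injective (by simpa using Subgroup.mem_center_iff.1 hm (e n))
    simpa [hN.center_eq_bot] using hcenter
  conj_surjective f := by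
    obtain ⟨n, hn⟩ := hN.conj_surjective ((MulAut.congr e).symm f)
    exact ⟨e n, MulEquiv.ext fun m => by simpa using congr(e ($hn (e.symm m)))⟩

theorem isComplement'_centralizer {H : Subgroup G} [H.Normal] (hH : IsCompleteGroup H) :
    H.IsComplement' (Subgroup.centralizer (H : Set G)) := by
  refine Subgroup.isComplement'_of_disjoint_and_mul_eq_univ ?_ (Set.eq_univ_of_forall fun g => ?_)
  · rw [Subgroup.disjoint_def]
    intro h hhH hhC
    have hcenter : (⟨h, hhH⟩ : H) ∈ Subgroup.center H :=
      Subgroup.mem_center_iff.2 fun k => Subtype.ext (Subgroup.mem_centralizer_iff.1 hhC k k.2)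
    simpa [hH.center_eq_bot] using hcenter
  · obtain ⟨n, hn⟩ := hH.conj_surjective (MulAut.conjNormal g)
    refine ⟨n, n.2, (n : G)⁻¹ * g, Subgroup.mem_centralizer_iff.2 fun k hk => ?_,
      mul_inv_cancel_left _ _⟩
    have hconj : (n : G) * k * (n : G)⁻¹ = g * k * g⁻¹ := congr(($hn ⟨k, hk⟩ : G))
    calc k * ((n : G)⁻¹ * g) = (n : G)⁻¹ * (n * k * (n : G)⁻¹) * g := by group
      _ = (n : G)⁻¹ * g * k := by rw [hconj]; group

theorem exists_mulEquiv_prod_zmod (hN : IsCompleteGroup N) {φ : N →* G}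
    (hφ : Function.Injective φ) (hnormal : φ.range.Normal) (hmax : IsCoatom φ.range) :
    ∃ p : ℕ, p.Prime ∧ ∃ g : G, orderOf g = p ∧ (∀ s ∈ φ.range, Commute g s) ∧
      Nonempty (G ≃* N × Multiplicative (ZMod p)) := by
  set C := Subgroup.centralizer (φ.range : Set G)
  have eN : N ≃* φ.range := φ.ofInjective hφ
  have hcompl : φ.range.IsComplement' C := (hN.of_mulEquiv eN).isComplement'_centralizer
  have hp : (Nat.card C).Prime := hcompl.symm.index_eq_card ▸ prime_index_of_isCoatom hmax
  have : Fact (Nat.card C).Prime := ⟨hp⟩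
  have : IsCyclic C := isCyclic_of_prime_card rfl
  obtain ⟨g, hg⟩ := IsCyclic.exists_ofOrder_eq_natCard (α := C)
  have eprod : φ.range × C ≃* G := MulEquiv.ofBijective
    (φ.range.subtype.noncommCoprod C.subtype fun s c =>
      Subgroup.mem_centralizer_iff.1 c.2 s s.2) hcompl
  have eC : C ≃* Multiplicative (ZMod (Nat.card C)) := mulEquivOfPrimeCardEq rfl (by simp)
  exact ⟨Nat.card C, hp, g, by simpa using hg,
    fun s hs => (Subgroup.mem_centralizer_iff.1 g.2 s hs).symm,
    ⟨eprod.symm.trans (eN.symm.prodCongr eC)⟩⟩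

end IsCompleteGroup

section Centralizers

open scoped Nat

theorem factorial_mul_two_pow_mul_factorial_lt (r : ℕ) {j : ℕ} (hj : 3 ≤ j) :
    r ! * 2 ^ j * (j + 1)! < (r + 2 * j)! := by
  induction j, hj using Nat.le_induction with
  | base =>
    calc r ! * 2 ^ 3 * (3 + 1)! = r ! * 192 := by rw [mul_assoc]; rfl
      _ < r ! * 6 ! := Nat.mul_lt_mul_of_pos_left (by decide) r.factorial_pos
      _ ≤ (r + 6)! := Nat.le_of_dvd (Nat.factorial_pos _)
          (Nat.factorial_mul_factorial_dvd_factorial_add r 6)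
  | succ j _ ih =>
    calc r ! * 2 ^ (j + 1) * (j + 2)! = (r ! * 2 ^ j * (j + 1)!) * (2 * (j + 2)) := by
          rw [pow_succ, Nat.factorial_succ (j + 1)]; ring
      _ < (r + 2 * j)! * ((r + 2 * j + 1) * (r + 2 * j + 2)) :=
          Nat.mul_lt_mul_of_lt_of_le ih (by nlinarith) (by positivity)
      _ = (r + 2 * (j + 1))! := by
          rw [show r + 2 * (j + 1) = r + 2 * j + 1 + 1 by ring, Nat.factorial_succ,
            Nat.factorial_succ]
          ring

/-- The hypothesis equates the orders of the centralizers of a transposition and of a product of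
`j + 1` disjoint transpositions with `r` fixed points; the solution `r = 0`, `j = 2` is the one
realized by the outer automorphisms of `S₆`. -/
theorem eq_zero_or_of_factorial_add_two_mul_eq {r j : ℕ}
    (h : (r + 2 * j)! = r ! * 2 ^ j * (j + 1)!) : j = 0 ∨ r = 0 ∧ j = 2 := by
  rcases Nat.lt_or_ge j 3 with hj | hj
  · interval_cases j
    · exact Or.inl rfl
    · have hquad : (r + 2) * (r + 1) = 4 := by
        refine Nat.eq_of_mul_eq_mul_left r.factorial_pos ?_
        simp only [mul_one, Nat.factorial_succ, Nat.factorial_zero] at h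
        linarith
      rcases r with _ | r
      · omega
      · nlinarith
    · refine Or.inr ⟨?_, rfl⟩
      have hquart : (r + 4) * (r + 3) * (r + 2) * (r + 1) = 24 := by
        refine Nat.eq_of_mul_eq_mul_left r.factorial_pos ?_
        simp only [Nat.reduceMul, Nat.factorial_succ, Nat.factorial_zero] at h
        linarith
      rcases r with _ | r
      · rfl
      · ring_nf at hquart
        omega
  · exact absurd h (factorial_mul_two_pow_mul_factorial_lt r hj).ne'

variable {α : Type*} [Fintype α] [DecidableEq α] {σ τ : Perm α}

theorem card_centralizer_of_cycleType_eq_replicate {k n : ℕ}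
    (hσ : σ.cycleType = Multiset.replicate k n) :
    Nat.card (Subgroup.centralizer {σ}) = (Fintype.card α - k * n)! * n ^ k * k ! := by
  rw [nat_card_centralizer, hσ, Multiset.toFinset_replicate]
  split_ifs with hk <;> simp [hk]

theorem isSwap_of_card_centralizer_eq (hα : Fintype.card α ≠ 6) (hτ : τ.IsSwap)
    (hσ : orderOf σ = 2)
    (h : Nat.card (Subgroup.centralizer {σ}) = Nat.card (Subgroup.centralizer {τ})) :
    σ.IsSwap := by
  obtain ⟨j, hj⟩ := cycleType_prime_order (hσ ▸ Nat.prime_two)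
  rw [hσ] at hj
  have hle : (j + 1) * 2 ≤ Fintype.card α := by
    simpa only [hj, Multiset.sum_replicate, smul_eq_mul] using sum_cycleType_le σ
  obtain ⟨r, hr⟩ := Nat.exists_eq_add_of_le' hle
  have hfactorial : (r + 2 * j)! = r ! * 2 ^ j * (j + 1)! := by
    rw [card_centralizer_of_cycleType_eq_replicate hj,
      card_centralizer_of_cycleType_eq_replicate (k := 1) (isSwap_iff_cycleType.1 hτ), hr,
      Nat.add_sub_cancel, show r + (j + 1) * 2 - 1 * 2 = r + 2 * j by omega, pow_succ,
      pow_one, Nat.factorial_one] at h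
    linarith
  obtain rfl | ⟨rfl, rfl⟩ := eq_zero_or_of_factorial_add_two_mul_eq hfactorial
  · exact isSwap_iff_cycleType.2 hj
  · exact absurd hr hα

end Centralizers

section Swaps

variable {α : Type*} [DecidableEq α]

theorem eq_or_eq_of_not_commute_swap_swap {a b c d : α} (h : ¬ Commute (swap a b) (swap c d)) :
    a = c ∨ a = d ∨ b = c ∨ b = d := by
  contrapose! h
  obtain ⟨hac, had, hbc, hbd⟩ := h
  rw [Commute, SemiconjBy, mul_swap_eq_swap_mul, swap_apply_of_ne_of_ne hac.symm hbc.symm,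
    swap_apply_of_ne_of_ne had.symm hbd.symm]

theorem not_commute_swap_swap {a b c : α} (hba : b ≠ a) (hca : c ≠ a) (hbc : b ≠ c) :
    ¬ Commute (swap a b) (swap a c) := fun h => by
  have happly := congr($(h.eq) a)
  rw [mul_apply, mul_apply, swap_apply_left, swap_apply_left, swap_apply_of_ne_of_ne hca hbc.symm,
    swap_apply_of_ne_of_ne hba hbc] at happly
  exact hbc happly.symm

theorem exists_swap_eq_of_not_commute {s t : Perm α} (hs : s.IsSwap) (ht : t.IsSwap)
    (h : ¬ Commute s t) :
    ∃ a b c, b ≠ c ∧ c ≠ a ∧ s = swap a b ∧ t = swap a c := by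
  obtain ⟨p, q, -, rfl⟩ := hs
  obtain ⟨u, v, huv, rfl⟩ := ht
  have hmeet := eq_or_eq_of_not_commute_swap_swap h
  have hne : swap p q ≠ swap u v := fun heq => h (heq ▸ Commute.refl _)
  grind [swap_comm]

theorem exists_eq_swap_or_eq_swap_of_not_commute {u : Perm α} (hu : u.IsSwap) {a b c : α}
    (hbc : b ≠ c) (hb : ¬ Commute u (swap a b)) (hc : ¬ Commute u (swap a c)) :
    (∃ d, u = swap a d) ∨ u = swap b c := by
  obtain ⟨p, q, -, rfl⟩ := hu
  have hmeet_ab := eq_or_eq_of_not_commute_swap_swap hb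
  have hmeet_ac := eq_or_eq_of_not_commute_swap_swap hc
  grind [swap_comm]

variable {f : Perm α →* Perm α}

theorem map_swap_eq_swap {x y z a b c : α} (hxz : x ≠ z) (hyz : y ≠ z) (hca : c ≠ a)
    (hcb : c ≠ b) (hb : f (swap x y) = swap a b) (hc : f (swap x z) = swap a c) :
    f (swap y z) = swap b c := by
  rw [← swap_mul_swap_mul_swap hxz.symm hyz.symm, ← swap_mul_swap_mul_swap hca hcb, map_mul,
    map_mul, swap_comm z x, swap_comm c a, hb, hc]

theorem exists_forall_exists_map_swap_eq (hf : Function.Injective f)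
    (hswap : ∀ s : Perm α, s.IsSwap → (f s).IsSwap) {x y z : α} (hxy : x ≠ y) (hxz : x ≠ z)
    (hyz : y ≠ z) : ∃ a, ∀ i, ∃ b, f (swap x i) = swap a b := by
  have himage : ∀ i, i ≠ x → (f (swap x i)).IsSwap := fun i hi => hswap _ ⟨x, i, hi.symm, rfl⟩
  have hcomm : ∀ i j, i ≠ x → j ≠ x → i ≠ j → ¬ Commute (f (swap x i)) (f (swap x j)) :=
    fun i j hi hj hij h => not_commute_swap_swap hi hj hij ((commute_map_iff hf).1 h)
  obtain ⟨a, b, c, hbc, hca, hb, hc⟩ := exists_swap_eq_of_not_commute (himage y hxy.symm)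
    (himage z hxz.symm) (hcomm y z hxy.symm hxz.symm hyz)
  refine ⟨a, fun i => ?_⟩
  rcases eq_or_ne i x with rfl | hix
  · exact ⟨a, by rw [swap_self, swap_self]; exact map_one f⟩
  rcases eq_or_ne i y with rfl | hiy
  · exact ⟨b, hb⟩
  rcases eq_or_ne i z with rfl | hiz
  · exact ⟨c, hc⟩
  refine (exists_eq_swap_or_eq_swap_of_not_commute (himage i hix) hbc
    (hb ▸ hcomm i y hix hxy.symm hiy) (hc ▸ hcomm i z hix hxz.symm hiz)).resolve_right fun hi => ?_
  rw [← map_swap_eq_swap hxz hyz hca hbc.symm hb hc] at hi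
  have happly := congr($(hf hi) x)
  rw [swap_apply_left, swap_apply_of_ne_of_ne hxy hxz] at happly
  exact hix happly

theorem eq_conj_of_forall_map_swap_eq [Finite α] {π : Perm α} {x : α}
    (h : ∀ i, f (swap x i) = swap (π x) (π i)) : f = (MulAut.conj π).toMonoidHom := by
  have hstar : ∀ i, f (swap x i) = π * swap x i * π⁻¹ := fun i => by rw [h, swap_apply_apply]
  refine MonoidHom.eq_of_eqOn_dense closure_isSwap ?_
  rintro _ ⟨i, j, hij, rfl⟩
  change f (swap i j) = π * swap i j * π⁻¹
  rcases eq_or_ne i x with rfl | hix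
  · exact hstar j
  rcases eq_or_ne j x with rfl | hjx
  · rw [swap_comm, hstar]
  · rw [← swap_mul_swap_mul_swap hjx hij.symm, swap_comm j x, map_mul, map_mul, hstar, hstar]
    group

theorem exists_eq_conj_of_map_isSwap [Finite α] (hα : 2 < Nat.card α)
    (hf : Function.Injective f) (hswap : ∀ s : Perm α, s.IsSwap → (f s).IsSwap) :
    ∃ π : Perm α, f = (MulAut.conj π).toMonoidHom := by
  have := Fintype.ofFinite α
  rw [Nat.card_eq_fintype_card] at hα
  obtain ⟨x, y, z, hxy, hxz, hyz⟩ := Fintype.two_lt_card_iff.1 hα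
  obtain ⟨a, ha⟩ := exists_forall_exists_map_swap_eq hf hswap hxy hxz hyz
  choose v hv using ha
  have hvx : a = v x := by
    rw [← swap_eq_one_iff, ← hv, swap_self]
    exact map_one f
  have hv_inj : Function.Injective v := fun i j hij => by
    have hswap_eq : swap x i = swap x j := hf (by rw [hv, hv, hij])
    simpa only [swap_apply_left] using congr($hswap_eq x)
  let π : Perm α := Equiv.ofBijective v (Finite.injective_iff_bijective.1 hv_inj)
  exact ⟨π, eq_conj_of_forall_map_swap_eq fun i => by rw [hv, hvx]; rfl⟩

end Swaps

section SymmetricGroup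

variable {α : Type*}

theorem center_perm_eq_bot (hα : Nat.card α ≠ 2) : Subgroup.center (Perm α) = ⊥ := by
  classical
  refine (Subgroup.eq_bot_iff_forall _).2 fun σ hσ => Perm.ext fun x => ?_
  by_contra (hx : σ x ≠ x)
  refine hα ((Nat.card_eq_two_iff' x).2 ⟨σ x, hx, fun z (hz : z ≠ x) => ?_⟩)
  by_contra hzx
  have happly := congr($(Subgroup.mem_center_iff.1 hσ (swap (σ x) z)) x)
  rw [mul_apply, mul_apply, swap_apply_left, swap_apply_of_ne_of_ne hx.symm hz.symm]
    at happly
  exact hzx happly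

variable [Finite α]

theorem conj_perm_surjective (hα : 2 < Nat.card α) (hα6 : Nat.card α ≠ 6) :
    Function.Surjective (MulAut.conj : Perm α →* MulAut (Perm α)) := fun f => by
  classical
  have := Fintype.ofFinite α
  rw [Nat.card_eq_fintype_card] at hα6
  obtain ⟨π, hπ⟩ := exists_eq_conj_of_map_isSwap (f := f.toMonoidHom) hα f.injective fun s hs =>
    isSwap_of_card_centralizer_eq hα6 hs ((f.orderOf_eq s).trans hs.orderOf)
      (card_centralizer_map f s)
  exact ⟨π, MulEquiv.ext fun s => congr($hπ s).symm⟩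

theorem isCompleteGroup_perm (hα2 : Nat.card α ≠ 2) (hα6 : Nat.card α ≠ 6) :
    IsCompleteGroup (Perm α) := by
  rcases lt_or_ge 2 (Nat.card α) with hα | hα
  · exact ⟨center_perm_eq_bot hα2, conj_perm_surjective hα hα6⟩
  · have : Subsingleton α := Finite.card_le_one_iff_subsingleton.1 (by omega)
    exact .of_subsingleton

theorem minimal_expansion_of_normal_symm_general (hα2 : Nat.card α ≠ 2) (hα6 : Nat.card α ≠ 6)
    {G : Type*} [Group G] {φ : Perm α →* G} (hφ : Function.Injective φ)
    (hnorm : φ.range.Normal) (hmax : IsCoatom φ.range) :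
    ∃ p : ℕ, p.Prime ∧ ∃ g : G, orderOf g = p ∧ (∀ s ∈ φ.range, Commute g s) ∧
      Nonempty (G ≃* Perm α × Multiplicative (ZMod p)) :=
  (isCompleteGroup_perm hα2 hα6).exists_mulEquiv_prod_zmod hφ hnorm hmax

end SymmetricGroup

/-- Let `G` be a finite group containing `S_d` (given by an injective
homomorphism `φ`) with `d ≥ 7`, suppose `S_d` is a proper normal subgroup of `G`, and
`G` is a minimal expansion of `S_d` (no subgroup strictly between `S_d` and `G`). Then
`G ≅ S_d × ℤ/pℤ` for some prime `p`, with the cyclic factor generated by an element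
commuting with all of `S_d`. -/
theorem minimal_expansion_of_normal_symm (d : ℕ) (hd : 7 ≤ d)
    (G : Type*) [Group G] [Finite G]
    (φ : Equiv.Perm (Fin d) →* G) (hφ : Function.Injective φ)
    (hnorm : φ.range.Normal) (hne : φ.range ≠ ⊤)
    (hmin : ∀ G₁ : Subgroup G, φ.range ≤ G₁ → G₁ = φ.range ∨ G₁ = ⊤) :
    ∃ p : ℕ, p.Prime ∧ ∃ g : G, orderOf g = p ∧
      (∀ s ∈ φ.range, Commute g s) ∧
      Nonempty (G ≃* Equiv.Perm (Fin d) × Multiplicative (ZMod p)) :=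
  minimal_expansion_of_normal_symm_general (by rw [Nat.card_fin]; omega)
    (by rw [Nat.card_fin]; omega) hφ hnorm
    ⟨hne, fun H hH => (hmin H hH.le).resolve_left hH.ne'⟩
end
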